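/- Let λ, t₁, t₂ ∈ ℝ with λ ≠ t₁, λ ≠ −t₂ and t₁ + t₂ ≠ 0. Then lim_{r→0⁺} b(r) · e^{πi b(r)² λ(λ + 2 t₂)} · e^{−2πi b(r)² t₁ t₂} · G_{b(r)}(i b(r)(t₁ − λ)) · G_{b(r)}(i b(r)(t₂ + λ)) / G_{b(r)}(i b(r)(t₁ + t₂)) = (1/2π) · Γ(i(t₁ − λ)) Γ(i(t₂ + λ)) / Γ(i(t₁ + t₂)). (This is the classical limit of the rescaled inverse quantum intertwining kernel b²·𝓕⌈bλ, bt; bt₁, bt₂⌉_* towards the classical ax+b kernel (1/2π) δ(t−t₁−t₂) Γ(−iλ+it₁)Γ(it₂+iλ)/Γ(it), with the delta factor removed.) -/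

import Mathlib

open Complex Filter Topology

/-- ζ̄_b = exp(−πi/4 − (πi/12)(b² + b^{−2})). -/
noncomputable def zetaBar (b : ℂ) : ℂ :=
  Complex.exp (-(Real.pi * Complex.I) / 4 - (Real.pi * Complex.I) / 12 * (b ^ 2 + b⁻¹ ^ 2))

/-- The quantum dilogarithm `G_b(x)`, defined for `Im(b²) > 0` by the infinite product
`ζ̄_b · ∏_{n=1}^∞ (1 − e^{2πi b⁻¹(x − n b⁻¹)}) / ∏_{n=0}^∞ (1 − e^{2πi b(x + n b)})`. -/
noncomputable def Gb (b x : ℂ) : ℂ :=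
  zetaBar b *
      (∏' n : ℕ, (1 - Complex.exp (2 * Real.pi * Complex.I * b⁻¹ * (x - (n + 1) * b⁻¹)))) /
    (∏' n : ℕ, (1 - Complex.exp (2 * Real.pi * Complex.I * b * (x + n * b))))

/-- `b(r) = e^{iπ/4} √r`, so that `b(r)² = i r`. -/
noncomputable def br (r : ℝ) : ℂ :=
  Complex.exp (Real.pi * Complex.I / 4) * (Real.sqrt r : ℂ)

theorem sq_mul_exp_neg_le {x : ℝ} (hx : 0 < x) :
    x ^ 2 * Real.exp (-x) ≤ (1 - Real.exp (-x)) ^ 2 := by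
  have h := Real.self_le_sinh_iff.2 (half_pos hx).le
  rw [Real.sinh_eq] at h
  have h1 : Real.exp (-x) = Real.exp (-(x / 2)) ^ 2 := by
    rw [← Real.exp_nat_mul]; congr 1; push_cast; ring
  have h2 : Real.exp (x / 2) * Real.exp (-(x / 2)) = 1 := by
    rw [← Real.exp_add]; simp
  have h3 := Real.exp_pos (-(x / 2))
  have h4 : x * Real.exp (-(x / 2)) ≤ 1 - Real.exp (-x) := by
    rw [h1]; nlinarith
  calc x ^ 2 * Real.exp (-x) = (x * Real.exp (-(x / 2))) ^ 2 := by rw [h1]; ring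
    _ ≤ _ := pow_le_pow_left₀ (by positivity) h4 2

theorem tendsto_one_sub_exp_div (z : ℂ) :
    Tendsto (fun r : ℝ => (1 - cexp (-(2 * Real.pi * r * z))) / r) (𝓝[>] 0)
      (𝓝 (2 * Real.pi * z)) := by
  have h : HasDerivAt (fun r : ℝ => 1 - cexp (-(2 * Real.pi * r * z))) (2 * Real.pi * z) 0 := by
    have h0 : HasDerivAt (fun r : ℂ => 1 - cexp (-(2 * Real.pi * r * z))) (2 * Real.pi * z)
        ((0 : ℝ) : ℂ) := by
      have := ((((hasDerivAt_id ((0 : ℝ) : ℂ)).const_mul (2 * (Real.pi : ℂ))).mul_const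
        z).neg.cexp).const_sub 1
      simpa using this
    exact h0.comp_ofReal
  have := h.tendsto_slope_zero_right
  refine this.congr fun r => ?_
  simp [div_eq_inv_mul]

theorem norm_one_sub_exp_mul_I_le (x : ℝ) : ‖1 - cexp (-(x * I))‖ ≤ |x| := by
  have := Real.norm_exp_I_mul_ofReal_sub_one_le (x := -x)
  rw [norm_sub_rev]
  simpa [mul_comm] using this

/-- The tail `∏_{n ≥ 1} (1 - q ^ (n + z))` of a `q`-Pochhammer symbol, with `q = exp (-2πr)`. -/
noncomputable def qTail (r : ℝ) (z : ℂ) : ℂ :=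
  ∏' n : ℕ, (1 - cexp (-(2 * Real.pi * r * (n + 1 + z))))

theorem summable_norm_qTail {r : ℝ} (hr : 0 < r) (z : ℂ) :
    Summable fun n : ℕ => ‖-cexp (-(2 * Real.pi * r * (n + 1 + z)))‖ := by
  have h : ∀ n : ℕ, ‖-cexp (-(2 * Real.pi * r * (n + 1 + z)))‖ =
      Real.exp (-(2 * Real.pi * r * (1 + z.re))) * Real.exp (-(2 * Real.pi * r)) ^ n := by
    intro n
    rw [norm_neg, Complex.norm_exp, ← Real.exp_nat_mul, ← Real.exp_add]
    congr 1
    simp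
    ring
  simp_rw [h]
  refine (summable_geometric_of_lt_one (Real.exp_pos _).le ?_).mul_left _
  rw [Real.exp_lt_one_iff]
  have := Real.pi_pos
  have : 0 < 2 * Real.pi * r := by positivity
  linarith

theorem multipliable_qTail {r : ℝ} (hr : 0 < r) (z : ℂ) :
    Multipliable fun n : ℕ => 1 - cexp (-(2 * Real.pi * r * (n + 1 + z))) := by
  simpa [sub_eq_add_neg] using multipliable_one_add_of_summable (summable_norm_qTail hr z)

theorem norm_exp_qTail (r s x : ℝ) :
    ‖cexp (-(2 * Real.pi * r * (x + s * I)))‖ = Real.exp (-(2 * Real.pi * r * x)) := by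
  rw [Complex.norm_exp]; simp

theorem one_sub_exp_le_norm (r s x : ℝ) :
    1 - Real.exp (-(2 * Real.pi * r * x)) ≤ ‖1 - cexp (-(2 * Real.pi * r * (x + s * I)))‖ := by
  have := norm_sub_norm_le (1 : ℂ) (cexp (-(2 * Real.pi * r * (x + s * I))))
  rwa [norm_one, norm_exp_qTail] at this

theorem one_sub_exp_pos {r x : ℝ} (hr : 0 < r) (hx : 0 < x) :
    0 < 1 - Real.exp (-(2 * Real.pi * r * x)) := by
  have := Real.pi_pos
  have h : 0 < 2 * Real.pi * r * x := by positivity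
  rw [sub_pos, Real.exp_lt_one_iff]
  linarith

theorem one_sub_exp_ne_zero {r x : ℝ} (hr : 0 < r) (hx : 0 < x) (s : ℝ) :
    1 - cexp (-(2 * Real.pi * r * (x + s * I))) ≠ 0 :=
  norm_pos_iff.1 ((one_sub_exp_pos hr hx).trans_le (one_sub_exp_le_norm r s x))

theorem qTail_ne_zero {r : ℝ} (hr : 0 < r) (s : ℝ) : qTail r (s * I) ≠ 0 := by
  have := tprod_one_add_ne_zero_of_summable
    (f := fun n : ℕ => -cexp (-(2 * Real.pi * r * (n + 1 + s * I)))) (fun n => ?_)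
    (summable_norm_qTail hr (s * I))
  · simpa [qTail, sub_eq_add_neg] using this
  · have := one_sub_exp_ne_zero hr (x := n + 1) (by positivity) s
    simpa [sub_eq_add_neg] using this

/-- The deviation from `1` of the `n`-th factor of the `q`-Beta product. -/
noncomputable def qBetaTerm (u v r : ℝ) (n : ℕ) : ℂ :=
  -(cexp (-(2 * Real.pi * r * (n + 1))) * (1 - cexp (-(2 * Real.pi * r * (u * I)))) *
      (1 - cexp (-(2 * Real.pi * r * (v * I))))) /
    ((1 - cexp (-(2 * Real.pi * r * (n + 1 + u * I)))) *
      (1 - cexp (-(2 * Real.pi * r * (n + 1 + v * I)))))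

theorem norm_qBetaTerm_le (u v : ℝ) {r : ℝ} (hr : 0 < r) (n : ℕ) :
    ‖qBetaTerm u v r n‖ ≤ |u| * |v| * (1 / ((n + 1 : ℕ) : ℝ) ^ 2) := by
  have hpi := Real.pi_pos
  set x : ℝ := 2 * Real.pi * r * (n + 1) with hx
  have hx0 : 0 < x := by positivity
  have hd : 0 < 1 - Real.exp (-x) := one_sub_exp_pos hr (by positivity)
  have hN (s : ℝ) : 1 - Real.exp (-x) ≤ ‖1 - cexp (-(2 * Real.pi * r * (n + 1 + s * I)))‖ := by
    simpa using one_sub_exp_le_norm r s (n + 1)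
  have hA (s : ℝ) : ‖1 - cexp (-(2 * Real.pi * r * (s * I)))‖ ≤ 2 * Real.pi * r * |s| := by
    have := norm_one_sub_exp_mul_I_le (2 * Real.pi * r * s)
    rw [abs_mul, abs_of_pos (by positivity : 0 < 2 * Real.pi * r)] at this
    simpa [mul_assoc] using this
  have hE : ‖cexp (-(2 * Real.pi * r * (n + 1)))‖ = Real.exp (-x) := by
    simpa using norm_exp_qTail r 0 (n + 1)
  rw [qBetaTerm, norm_div, norm_neg, norm_mul, norm_mul, norm_mul, hE]
  calc _ ≤ Real.exp (-x) * (2 * Real.pi * r * |u|) * (2 * Real.pi * r * |v|) /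
        ((1 - Real.exp (-x)) * (1 - Real.exp (-x))) := by
        gcongr
        exacts [hA u, hA v, hN u, hN v]
    _ ≤ _ := by
        rw [div_le_iff₀ (by positivity)]
        have h := sq_mul_exp_neg_le hx0
        have e : Real.exp (-x) * (2 * Real.pi * r * |u|) * (2 * Real.pi * r * |v|) =
          |u| * |v| * (1 / ((n + 1 : ℕ) : ℝ) ^ 2) * (x ^ 2 * Real.exp (-x)) := by
          rw [hx]; push_cast; field_simp
        rw [e, ← sq]
        gcongr

theorem tendsto_qBetaTerm (u v : ℝ) (n : ℕ) :
    Tendsto (fun r => qBetaTerm u v r n) (𝓝[>] 0)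
      (𝓝 (-(u * I * (v * I)) / ((n + 1 + u * I) * (n + 1 + v * I)))) := by
  have hne (s : ℝ) : (n + 1 + s * I : ℂ) ≠ 0 := by
    intro h
    have := congrArg Complex.re h
    simp at this
    exact absurd this (by positivity)
  have hpi : (2 * Real.pi : ℂ) ≠ 0 := by simp [Real.pi_ne_zero]
  have hE : Tendsto (fun r : ℝ => cexp (-(2 * Real.pi * r * (n + 1)))) (𝓝[>] 0) (𝓝 1) := by
    have : Continuous fun r : ℝ => cexp (-(2 * Real.pi * r * (n + 1))) := by fun_prop
    simpa using (this.tendsto 0).mono_left nhdsWithin_le_nhds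
  have h := ((hE.mul (tendsto_one_sub_exp_div (u * I))).mul
    (tendsto_one_sub_exp_div (v * I))).neg.div
    ((tendsto_one_sub_exp_div (n + 1 + u * I)).mul (tendsto_one_sub_exp_div (n + 1 + v * I)))
    (mul_ne_zero (mul_ne_zero hpi (hne u)) (mul_ne_zero hpi (hne v)))
  have e : -(1 * (2 * Real.pi * (u * I)) * (2 * Real.pi * (v * I))) /
      (2 * Real.pi * (n + 1 + u * I) * (2 * Real.pi * (n + 1 + v * I))) =
      -(u * I * (v * I)) / ((n + 1 + u * I) * (n + 1 + v * I)) := by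
    have := hne u
    have := hne v
    field_simp
  rw [e] at h
  refine h.congr' ?_
  filter_upwards [self_mem_nhdsWithin] with r hr
  have hr0 : (r : ℂ) ≠ 0 := by exact_mod_cast (ne_of_gt hr)
  have h1 := one_sub_exp_ne_zero hr (x := n + 1) (by positivity) u
  have h2 := one_sub_exp_ne_zero hr (x := n + 1) (by positivity) v
  push_cast at h1 h2
  simp only [Pi.div_apply, qBetaTerm]
  field_simp

theorem summable_qBeta_bound (u v : ℝ) :
    Summable fun n : ℕ => |u| * |v| * (1 / ((n + 1 : ℕ) : ℝ) ^ 2) :=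
  ((summable_nat_add_iff 1).2 (Real.summable_one_div_nat_pow.2 (by norm_num : 1 < 2))).mul_left _

theorem qTail_mul_qTail_eq (u v : ℝ) {r : ℝ} (hr : 0 < r) :
    qTail r 0 * qTail r ((u + v : ℝ) * I) =
      qTail r (u * I) * qTail r (v * I) * ∏' n, (1 + qBetaTerm u v r n) := by
  have hm : Multipliable fun n => 1 + qBetaTerm u v r n :=
    multipliable_one_add_of_summable <|
      (summable_qBeta_bound u v).of_nonneg_of_le (fun _ => norm_nonneg _) (norm_qBetaTerm_le u v hr)
  have hu := multipliable_qTail hr (u * I)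
  have hv := multipliable_qTail hr (v * I)
  simp only [qTail]
  rw [← (multipliable_qTail hr 0).tprod_mul (multipliable_qTail hr _), ← hu.tprod_mul hv,
    ← (hu.mul hv).tprod_mul hm]
  refine tprod_congr fun n => ?_
  have h1 := one_sub_exp_ne_zero hr (x := n + 1) (by positivity) u
  have h2 := one_sub_exp_ne_zero hr (x := n + 1) (by positivity) v
  push_cast at h1 h2
  rw [qBetaTerm, one_add_div (mul_ne_zero h1 h2), mul_div_cancel₀ _ (mul_ne_zero h1 h2)]
  have e1 (z : ℂ) : cexp (-(2 * Real.pi * r * (n + 1 + z))) =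
      cexp (-(2 * Real.pi * r * (n + 1))) * cexp (-(2 * Real.pi * r * z)) := by
    rw [← Complex.exp_add]; ring_nf
  have e2 : cexp (-(2 * Real.pi * r * ((u + v : ℝ) * I))) =
      cexp (-(2 * Real.pi * r * (u * I))) * cexp (-(2 * Real.pi * r * (v * I))) := by
    rw [← Complex.exp_add]; push_cast; ring_nf
  rw [e1 0, e1 (u * I), e1 (v * I), e1 ((u + v : ℝ) * I), e2, mul_zero, neg_zero, Complex.exp_zero]
  ring

theorem tendsto_qBeta (u v : ℝ) :
    Tendsto (fun r => qTail r 0 * qTail r ((u + v : ℝ) * I) / (qTail r (u * I) * qTail r (v * I)))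
      (𝓝[>] 0)
      (𝓝 (∏' n : ℕ, (1 + -(u * I * (v * I)) / ((n + 1 + u * I) * (n + 1 + v * I))))) := by
  have h := tendsto_tprod_one_add_of_dominated_convergence (summable_qBeta_bound u v)
    (tendsto_qBetaTerm u v)
    (by filter_upwards [self_mem_nhdsWithin] with r hr using norm_qBetaTerm_le u v hr)
  refine h.congr' ?_
  filter_upwards [self_mem_nhdsWithin] with r hr
  rw [qTail_mul_qTail_eq u v hr,
    mul_div_cancel_left₀ _ (mul_ne_zero (qTail_ne_zero hr u) (qTail_ne_zero hr v))]

theorem tprod_eq_Gamma_mul_Gamma_div {u v : ℂ} (hu : ∀ n : ℕ, u + n ≠ 0) (hv : ∀ n : ℕ, v + n ≠ 0)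
    (huv : ∀ n : ℕ, u + v + n ≠ 0)
    (hm : Multipliable fun n : ℕ => 1 + -(u * v) / ((n + 1 + u) * (n + 1 + v))) :
    (u + v) / (u * v) * ∏' n : ℕ, (1 + -(u * v) / ((n + 1 + u) * (n + 1 + v))) =
      Gamma u * Gamma v / Gamma (u + v) := by
  have hG : Gamma (u + v) ≠ 0 := Gamma_ne_zero fun m h => huv m (by rw [h]; ring)
  refine tendsto_nhds_unique (hm.hasProd.tendsto_prod_nat.const_mul _)
    ((((GammaSeq_tendsto_Gamma u).mul (GammaSeq_tendsto_Gamma v)).div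
      (GammaSeq_tendsto_Gamma (u + v)) hG).congr' ?_)
  filter_upwards [eventually_ne_atTop 0] with n hn
  have hn' : (n : ℂ) ≠ 0 := by exact_mod_cast hn
  have hp (z : ℂ) (hz : ∀ n : ℕ, z + n ≠ 0) :
      ∏ j ∈ Finset.range n, (z + (j + 1 : ℕ)) ≠ 0 := Finset.prod_ne_zero_iff.2 fun j _ => hz _
  have hterm : ∏ j ∈ Finset.range n, (1 + -(u * v) / ((j + 1 + u) * (j + 1 + v))) =
      n.factorial * (∏ j ∈ Finset.range n, (u + v + (j + 1 : ℕ))) /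
        ((∏ j ∈ Finset.range n, (u + (j + 1 : ℕ))) * ∏ j ∈ Finset.range n, (v + (j + 1 : ℕ))) := by
    rw [← Finset.prod_range_add_one_eq_factorial, Nat.cast_prod, ← Finset.prod_mul_distrib,
      ← Finset.prod_mul_distrib, ← Finset.prod_div_distrib]
    refine Finset.prod_congr rfl fun j _ => ?_
    have h1 := hu (j + 1)
    have h2 := hv (j + 1)
    push_cast at h1 h2 ⊢
    rw [add_comm ((j : ℂ) + 1) u, add_comm ((j : ℂ) + 1) v, one_add_div (mul_ne_zero h1 h2)]
    ring
  have hf : (n.factorial : ℂ) ≠ 0 := by exact_mod_cast n.factorial_ne_zero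
  have hu0 : u ≠ 0 := by simpa using hu 0
  have hv0 : v ≠ 0 := by simpa using hv 0
  have huv0 : u + v ≠ 0 := by simpa using huv 0
  have hnu : (n : ℂ) ^ u ≠ 0 := by simp [cpow_eq_zero_iff, hn]
  have hnv : (n : ℂ) ^ v ≠ 0 := by simp [cpow_eq_zero_iff, hn]
  have hpu := hp u hu
  have hpv := hp v hv
  have hpw := hp (u + v) huv
  rw [hterm]
  simp only [Pi.div_apply, GammaSeq, Finset.prod_range_succ', Nat.cast_zero, add_zero,
    cpow_add _ _ hn']
  field_simp

/-- The modular transformation of the Dedekind eta function on the imaginary axis. -/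
theorem qTail_zero_modular {r : ℝ} (hr : 0 < r) :
    (Real.sqrt r : ℂ) * cexp (-(Real.pi * r / 12)) * qTail r 0 =
      cexp (-(Real.pi / (12 * r))) * qTail r⁻¹ 0 := by
  have heta (t : ℝ) : ModularForm.eta (t * I) = cexp (-(Real.pi * t / 12)) * qTail t 0 := by
    rw [ModularForm.eta, qTail]
    congr 1
    · rw [Function.Periodic.qParam]
      congr 1
      push_cast
      linear_combination (2 * Real.pi * t / 24 : ℂ) * I_sq
    · refine tprod_congr fun n => ?_
      rw [ModularForm.eta_q_eq_cexp]
      congr 2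
      linear_combination (2 * Real.pi * t * (n + 1) : ℂ) * I_sq
  have hr0 : (r : ℂ) ≠ 0 := by exact_mod_cast hr.ne'
  have h := ModularForm.eta_comp_eq_csqrt_I_inv (x := (r * I : ℂ))
    (by simpa [UpperHalfPlane.upperHalfPlaneSet] using hr)
  have harg : -1 / (r * I : ℂ) = (r⁻¹ : ℝ) * I := by
    push_cast
    field_simp
    rw [I_sq]
  have hsqrt : Complex.sqrt (r * I) = Real.sqrt r * Complex.sqrt I := by
    have hI : log (r * I : ℂ) = (Real.log r : ℂ) + log I := by
      simpa using log_ofReal_mul hr I_ne_zero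
    rw [Complex.sqrt, Complex.sqrt, cpow_def_of_ne_zero (mul_ne_zero hr0 I_ne_zero),
      cpow_def_of_ne_zero I_ne_zero, hI, add_mul, Complex.exp_add, Real.sqrt_eq_rpow,
      Real.rpow_def_of_pos hr]
    push_cast
    simp
  have hI : Complex.sqrt I ≠ 0 := by simp [Complex.sqrt]
  simp only [Function.comp_apply, harg, Pi.smul_apply, Pi.mul_apply, smul_eq_mul, hsqrt, heta] at h
  have e : cexp (-(Real.pi * (r⁻¹ : ℝ) / 12)) = cexp (-(Real.pi / (12 * r))) := by
    congr 1
    push_cast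
    field_simp
  rw [e] at h
  rw [h]
  field_simp

theorem br_sq {r : ℝ} (hr : 0 ≤ r) : br r ^ 2 = r * I := by
  have : (Real.sqrt r : ℂ) ^ 2 = r := by exact_mod_cast Real.sq_sqrt hr
  rw [br, mul_pow, this, ← Complex.exp_nat_mul,
    show ((2 : ℕ) : ℂ) * (Real.pi * I / 4) = Real.pi / 2 * I by push_cast; ring, exp_pi_div_two_mul_I]
  ring

theorem br_mul_zetaBar {r : ℝ} (hr : 0 < r) :
    br r * zetaBar (br r) = r * qTail r 0 / qTail r⁻¹ 0 := by
  have hr0 : (r : ℂ) ≠ 0 := by exact_mod_cast hr.ne'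
  have hs : (Real.sqrt r : ℂ) * Real.sqrt r = r := by exact_mod_cast Real.mul_self_sqrt hr.le
  have hq : qTail r⁻¹ 0 ≠ 0 := by simpa using qTail_ne_zero (inv_pos.2 hr) 0
  have hb : br r * zetaBar (br r) =
      Real.sqrt r * cexp (Real.pi * r / 12) * cexp (-(Real.pi / (12 * r))) := by
    rw [zetaBar, inv_pow, br_sq hr.le, br, mul_right_comm, ← Complex.exp_add,
      mul_assoc (Real.sqrt r : ℂ), ← Complex.exp_add, mul_comm]
    congr 2
    field_simp
    linear_combination (-4 * r ^ 2 : ℂ) * I_sq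
  rw [hb, eq_div_iff hq, mul_assoc, ← qTail_zero_modular hr, Complex.exp_neg]
  field_simp
  linear_combination qTail r 0 * hs

/-- The product in the numerator of `Gb (br r) (I * br r * s)`. -/
noncomputable def qDual (s r : ℝ) : ℂ :=
  qTail r⁻¹ (r * s)

theorem tendsto_qDual (s : ℝ) : Tendsto (qDual s) (𝓝[>] 0) (𝓝 1) := by
  have hpi := Real.pi_pos
  have hq : Tendsto (fun r : ℝ => Real.exp (-(2 * Real.pi * r⁻¹))) (𝓝[>] 0) (𝓝 0) :=
    Real.tendsto_exp_neg_atTop_nhds_zero.comp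
      (tendsto_inv_nhdsGT_zero.const_mul_atTop (by positivity))
  have key {r : ℝ} (hr : 0 < r) (n : ℕ) :
      ‖-cexp (-(2 * Real.pi * (r⁻¹ : ℝ) * (n + 1 + r * s)))‖ =
        Real.exp (-(2 * Real.pi * s)) * Real.exp (-(2 * Real.pi * r⁻¹)) ^ (n + 1) := by
    rw [norm_neg, ← Real.exp_nat_mul, ← Real.exp_add,
      show (-(2 * Real.pi * (r⁻¹ : ℝ) * (n + 1 + r * s)) : ℂ) =
        ((-(2 * Real.pi * r⁻¹ * (n + 1 + r * s)) : ℝ) : ℂ) by push_cast; ring,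
      Complex.norm_exp_ofReal]
    congr 1
    push_cast
    field_simp
    ring
  have h := tendsto_tprod_one_add_of_dominated_convergence (𝓕 := 𝓝[>] (0 : ℝ))
    (f := fun (r : ℝ) (n : ℕ) => -cexp (-(2 * Real.pi * (r⁻¹ : ℝ) * (n + 1 + r * s))))
    (g := fun _ => 0)
    (bound := fun n => Real.exp (-(2 * Real.pi * s)) * (1 / 2) ^ (n + 1))
    (((summable_nat_add_iff 1).2 summable_geometric_two).mul_left _) (fun n => ?_) ?_
  · rw [tprod_congr fun _ => add_zero (1 : ℂ), tprod_one] at h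
    exact h.congr fun r => by simp [qDual, qTail, sub_eq_add_neg]
  · rw [tendsto_zero_iff_norm_tendsto_zero]
    have := (hq.pow (n + 1)).const_mul (Real.exp (-(2 * Real.pi * s)))
    rw [zero_pow n.succ_ne_zero, mul_zero] at this
    refine this.congr' ?_
    filter_upwards [self_mem_nhdsWithin] with r hr using (key hr n).symm
  · filter_upwards [self_mem_nhdsWithin, hq.eventually_le_const (by norm_num : (0 : ℝ) < 1 / 2)]
      with r hr hr2 n
    rw [key hr n]
    gcongr

theorem Gb_br {r : ℝ} (hr : 0 < r) (s : ℝ) :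
    Gb (br r) (I * br r * s) = zetaBar (br r) * qDual s r /
      ((1 - cexp (-(2 * Real.pi * r * (s * I)))) * qTail r (s * I)) := by
  have hr0 : (r : ℂ) ≠ 0 := by exact_mod_cast hr.ne'
  have hsq := br_sq hr.le
  have hb : br r ≠ 0 := by
    intro h
    rw [h] at hsq
    simp [hr0] at hsq
  have hbi : (br r)⁻¹ * (br r)⁻¹ = -(I / r) := by
    rw [← mul_inv, ← sq, hsq, mul_inv, inv_I]
    ring
  rw [Gb, qDual, qTail, qTail]
  congr 1
  · congr 1
    refine tprod_congr fun n => ?_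
    congr 2
    rw [show 2 * (Real.pi : ℂ) * I * (br r)⁻¹ * (I * br r * s - (n + 1) * (br r)⁻¹) =
      2 * Real.pi * I * (I * s * ((br r)⁻¹ * br r) - (n + 1) * ((br r)⁻¹ * (br r)⁻¹)) by ring,
      inv_mul_cancel₀ hb, hbi]
    push_cast
    field_simp
    linear_combination (r * s + n + 1 : ℂ) * I_sq
  · have hexp (n : ℕ) : 2 * (Real.pi : ℂ) * I * br r * (I * br r * s + n * br r) =
        -(2 * Real.pi * r * (n + s * I)) := by
      linear_combination (2 * Real.pi * I * (I * s + n) : ℂ) * hsq +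
        (2 * Real.pi * r * (I * s + n) : ℂ) * I_sq
    simp_rw [hexp]
    rw [tprod_eq_zero_mul']
    · simp
    · simpa using multipliable_qTail hr (s * I)

theorem qBeta_limit {u v : ℝ} (hu : u ≠ 0) (hv : v ≠ 0) (huv : u + v ≠ 0) :
    Tendsto (fun r : ℝ => br r * Gb (br r) (I * br r * u) * Gb (br r) (I * br r * v) /
        Gb (br r) (I * br r * (u + v : ℝ))) (𝓝[>] 0)
      (𝓝 (1 / (2 * (Real.pi : ℂ)) * Gamma (u * I) * Gamma (v * I) / Gamma ((u + v : ℝ) * I))) := by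
  have hpi : (Real.pi : ℂ) ≠ 0 := by simp [Real.pi_ne_zero]
  have hne {s : ℝ} (hs : s ≠ 0) (n : ℕ) : (s * I + n : ℂ) ≠ 0 := by
    intro h
    have := congrArg Complex.im h
    simp at this
    exact hs this
  have hI {s : ℝ} (hs : s ≠ 0) : (s * I : ℂ) ≠ 0 := by simpa using hne hs 0
  have hI2 {s : ℝ} (hs : s ≠ 0) : (2 * Real.pi * (s * I) : ℂ) ≠ 0 :=
    mul_ne_zero (mul_ne_zero two_ne_zero hpi) (hI hs)
  have hm : Multipliable fun n : ℕ =>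
      (1 + -(u * I * (v * I)) / ((n + 1 + u * I) * (n + 1 + v * I)) : ℂ) :=
    multipliable_one_add_of_summable <|
      (summable_qBeta_bound u v).of_nonneg_of_le (fun _ => norm_nonneg _) fun n =>
        le_of_tendsto (tendsto_qBetaTerm u v n).norm (by
          filter_upwards [self_mem_nhdsWithin] with r hr using norm_qBetaTerm_le u v hr n)
  have hGamma := tprod_eq_Gamma_mul_Gamma_div (hne hu) (hne hv)
    (by simpa [add_mul] using hne huv) hm
  have hD := (((tendsto_qDual u).mul (tendsto_qDual v)).div
    ((tendsto_qDual (u + v)).mul (tendsto_qDual 0)) (by simp))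
  have hF := (tendsto_one_sub_exp_div ((u + v : ℝ) * I)).div
    ((tendsto_one_sub_exp_div (u * I)).mul (tendsto_one_sub_exp_div (v * I)))
    (mul_ne_zero (hI2 hu) (hI2 hv))
  have h := (hD.mul hF).mul (tendsto_qBeta u v)
  have hlim : 1 / (2 * (Real.pi : ℂ)) * Gamma (u * I) * Gamma (v * I) / Gamma ((u + v : ℝ) * I) =
      1 * 1 / (1 * 1) * (2 * Real.pi * ((u + v : ℝ) * I) /
        (2 * Real.pi * (u * I) * (2 * Real.pi * (v * I)))) *
        ∏' n : ℕ, (1 + -(u * I * (v * I)) / ((n + 1 + u * I) * (n + 1 + v * I)) : ℂ) := by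
    rw [mul_assoc, mul_div_assoc, show ((u + v : ℝ) * I : ℂ) = u * I + v * I by push_cast; ring,
      ← hGamma, ← mul_assoc]
    congr 1
    have := hI hu
    have := hI hv
    field_simp
  rw [hlim]
  refine h.congr' ?_
  have hnz {s : ℝ} (hs : s ≠ 0) : ∀ᶠ r : ℝ in 𝓝[>] 0, 1 - cexp (-(2 * Real.pi * r * (s * I))) ≠ 0 :=
    ((tendsto_one_sub_exp_div (s * I)).eventually_ne (hI2 hs)).mono fun r h h0 => h (by simp [h0])
  have hdz (s : ℝ) := (tendsto_qDual s).eventually_ne one_ne_zero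
  filter_upwards [self_mem_nhdsWithin, hnz hu, hnz hv, hnz huv, hdz u, hdz v, hdz (u + v), hdz 0]
    with r hr hu hv huv hdu hdv hduv hd0
  have hr0 : (r : ℂ) ≠ 0 := by exact_mod_cast (ne_of_gt hr)
  have hz : zetaBar (br r) ≠ 0 := Complex.exp_ne_zero _
  have hb := br_mul_zetaBar hr
  have hd : qDual 0 r = qTail r⁻¹ 0 := by simp [qDual]
  rw [← hd] at hb
  have hqu := qTail_ne_zero hr u
  have hqv := qTail_ne_zero hr v
  have hquv := qTail_ne_zero hr (u + v)
  have hrearr : br r * Gb (br r) (I * br r * u) * Gb (br r) (I * br r * v) /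
      Gb (br r) (I * br r * (u + v : ℝ)) = br r * zetaBar (br r) *
      (qDual u r * qDual v r / qDual (u + v) r *
      ((1 - cexp (-(2 * Real.pi * r * ((u + v : ℝ) * I)))) /
        ((1 - cexp (-(2 * Real.pi * r * (u * I)))) * (1 - cexp (-(2 * Real.pi * r * (v * I)))))) *
      (qTail r ((u + v : ℝ) * I) / (qTail r (u * I) * qTail r (v * I)))) := by
    rw [Gb_br hr, Gb_br hr, Gb_br hr]
    field_simp
  rw [hrearr, hb]
  simp only [Pi.div_apply]
  field_simp

/-- Classical limit of the rescaled inverse quantum intertwining kernel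
`b²·𝓕⌈bλ, bt; bt₁, bt₂⌉_*` (delta factor removed): for real `λ, t₁, t₂` with
`λ ≠ t₁`, `λ ≠ −t₂`, `t₁ + t₂ ≠ 0`,
`lim_{r→0⁺} b(r) e^{πi b(r)² λ(λ+2t₂)} e^{−2πi b(r)² t₁t₂} G_{b(r)}(ib(r)(t₁−λ)) G_{b(r)}(ib(r)(t₂+λ)) / G_{b(r)}(ib(r)(t₁+t₂))`
`= (1/2π) Γ(i(t₁−λ)) Γ(i(t₂+λ)) / Γ(i(t₁+t₂))`. -/
theorem stmt9 (l t1 t2 : ℝ) (h1 : l ≠ t1) (h2 : l ≠ -t2) (h3 : t1 + t2 ≠ 0) :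
    Tendsto
      (fun r : ℝ =>
        br r * Complex.exp ((Real.pi : ℂ) * Complex.I * (br r) ^ 2 * l * (l + 2 * t2)) *
            Complex.exp (-(2 * (Real.pi : ℂ) * Complex.I * (br r) ^ 2 * t1 * t2)) *
            Gb (br r) (Complex.I * br r * ((t1 : ℂ) - l)) *
            Gb (br r) (Complex.I * br r * ((t2 : ℂ) + l)) /
          Gb (br r) (Complex.I * br r * ((t1 : ℂ) + t2)))
      (𝓝[>] (0 : ℝ))
      (𝓝 (1 / (2 * (Real.pi : ℂ)) * Complex.Gamma (Complex.I * ((t1 : ℂ) - l)) *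
          Complex.Gamma (Complex.I * ((t2 : ℂ) + l)) /
          Complex.Gamma (Complex.I * ((t1 : ℂ) + t2)))) := by
  have hu : t1 - l ≠ 0 := sub_ne_zero.2 h1.symm
  have hv : t2 + l ≠ 0 := fun h => h2 (by linarith)
  have huv : t1 - l + (t2 + l) ≠ 0 := by simpa using h3
  have h := qBeta_limit hu hv huv
  have hE : Tendsto (fun r : ℝ =>
      cexp ((Real.pi : ℂ) * I * (r * I) * l * (l + 2 * t2)) *
        cexp (-(2 * (Real.pi : ℂ) * I * (r * I) * t1 * t2))) (𝓝[>] 0) (𝓝 1) := by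
    have hc : Continuous fun r : ℝ => cexp ((Real.pi : ℂ) * I * (r * I) * l * (l + 2 * t2)) *
        cexp (-(2 * (Real.pi : ℂ) * I * (r * I) * t1 * t2)) := by fun_prop
    simpa using (hc.tendsto 0).mono_left nhdsWithin_le_nhds
  have hlim := hE.mul h
  have hsum : t1 - l + (t2 + l) = t1 + t2 := by ring
  rw [hsum, one_mul] at hlim
  simp only [mul_comm _ I] at hlim
  push_cast at hlim
  refine hlim.congr' ?_
  filter_upwards [self_mem_nhdsWithin] with r hr
  rw [br_sq (le_of_lt hr)]
  ring_nf
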